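/- In the two-mode noisy interferometry setting, any symmetric L_y with V L_y V + Ω L_y Ω = ∂_y V satisfies ℱ_{xy} := (1/2)·tr( (∂_x V) · L_y ) + 2·(∂_y d)ᵀ V⁻¹ (∂_x d) = ( 2·(x² + y² + 1)·cosh(2r) + 4 x y ) / ( 2 x y·[ 2 cosh(2r)·(x² + y²) + x y cosh(4r) ] + x⁴ + 4 x² y² + y⁴ − 1 ). -/

import Mathlib

open Matrix

noncomputable section

/-- The standard symplectic form on two modes (4×4). -/
def Omega4 : Matrix (Fin 4) (Fin 4) ℝ :=
  !![0, 1, 0, 0; -1, 0, 0, 0; 0, 0, 0, 1; 0, 0, -1, 0]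

/-- Covariance matrix of the two-mode squeezed input with squeezing parameter `r`. -/
def V0 (r : ℝ) : Matrix (Fin 4) (Fin 4) ℝ :=
  !![Real.cosh (2*r), 0, Real.sinh (2*r), 0;
     0, Real.cosh (2*r), 0, -Real.sinh (2*r);
     Real.sinh (2*r), 0, Real.cosh (2*r), 0;
     0, -Real.sinh (2*r), 0, Real.cosh (2*r)]

/-- Input displacement `√2·(0, a, 0, a)ᵀ` of the optimal probe. -/
def d0 (a : ℝ) : Fin 4 → ℝ := ![0, Real.sqrt 2 * a, 0, Real.sqrt 2 * a]

/-- Phase rotations by `±φ/2` on the two modes. -/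
def Sphase (φ : ℝ) : Matrix (Fin 4) (Fin 4) ℝ :=
  !![Real.cos (φ/2), Real.sin (φ/2), 0, 0;
     -Real.sin (φ/2), Real.cos (φ/2), 0, 0;
     0, 0, Real.cos (φ/2), -Real.sin (φ/2);
     0, 0, Real.sin (φ/2), Real.cos (φ/2)]

/-- Evolved covariance matrix `x·S_φ V₀ S_φᵀ + y·𝟙₄`. -/
def Vm (r φ x y : ℝ) : Matrix (Fin 4) (Fin 4) ℝ :=
  x • (Sphase φ * V0 r * (Sphase φ)ᵀ) + y • (1 : Matrix (Fin 4) (Fin 4) ℝ)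

/-- Evolved displacement `√x·S_φ d₀`. -/
def dm (a φ x : ℝ) : Fin 4 → ℝ := Real.sqrt x • (Sphase φ).mulVec (d0 a)

/-- Entrywise partial derivative of `Vm` with respect to `φ`. -/
def dVdphi (r φ x y : ℝ) : Matrix (Fin 4) (Fin 4) ℝ :=
  Matrix.of fun i j => deriv (fun t => Vm r t x y i j) φ

/-- Entrywise partial derivative of `Vm` with respect to `x`. -/
def dVdx (r φ x y : ℝ) : Matrix (Fin 4) (Fin 4) ℝ :=
  Matrix.of fun i j => deriv (fun t => Vm r φ t y i j) x

/-- Entrywise partial derivative of `Vm` with respect to `y`. -/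
def dVdy (r φ x y : ℝ) : Matrix (Fin 4) (Fin 4) ℝ :=
  Matrix.of fun i j => deriv (fun t => Vm r φ x t i j) y

/-- Entrywise partial derivative of `dm` with respect to `φ`. -/
def ddphi (a φ x : ℝ) : Fin 4 → ℝ := fun i => deriv (fun t => dm a t x i) φ

/-- Entrywise partial derivative of `dm` with respect to `x`. -/
def ddx (a φ x : ℝ) : Fin 4 → ℝ := fun i => deriv (fun t => dm a φ t i) x

/-- Entrywise partial derivative of `dm` with respect to `y` (the displacement does
not depend on `y`). -/
def ddy (a φ x y : ℝ) : Fin 4 → ℝ := fun i => deriv (fun _t : ℝ => dm a φ x i) y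

/-!
The phase rotation commutes with the mode correlation matrix `Z`, so for every `φ` the covariance
matrix `V` lies in the span of `1` and `Z`. The map `T : L ↦ V L V + Ω L Ω` is self-adjoint for the
trace pairing and preserves this span, on which it acts with determinant `det V - 1`. Solving
`T K = ∂ₓV` there gives `tr ((∂ₓV) L) = tr (K (T L)) = tr (K ∂_yV) = tr K`, without solving for `L`.
The displacement term vanishes because `d` does not depend on `y`.
-/

section SLDMap

variable {n R : Type*} [Fintype n] [CommRing R]

/-- The linear map `L ↦ V L V + Ω L Ω`, whose value at the quadratic part of a symmetric logarithmic
derivative is the corresponding derivative of the covariance matrix `V`. -/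
def sldMap (V Ω L : Matrix n n R) : Matrix n n R :=
  V * L * V + Ω * L * Ω

lemma trace_mul_sandwich (K U L : Matrix n n R) :
    (K * (U * L * U)).trace = (U * K * U * L).trace := by
  rw [← mul_assoc, trace_mul_comm]
  simp only [mul_assoc]

lemma trace_mul_sldMap (V Ω K L : Matrix n n R) :
    (K * sldMap V Ω L).trace = (sldMap V Ω K * L).trace := by
  simp only [sldMap, mul_add, add_mul, trace_add, trace_mul_sandwich]

variable [DecidableEq n] {Ω Z : Matrix n n R}

lemma sldMap_smul_one_add_smul (hΩ : Ω * Ω = -1) (hZ : Z * Z = 1) (hΩZ : Ω * Z * Ω = Z)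
    (A B p q : R) :
    sldMap (A • 1 + B • Z) Ω (p • 1 + q • Z) =
      ((A ^ 2 + B ^ 2 - 1) * p + 2 * A * B * q) • 1 +
        (2 * A * B * p + (A ^ 2 + B ^ 2 + 1) * q) • Z := by
  simp only [sldMap, mul_add, add_mul, mul_smul_comm, smul_mul_assoc, mul_one, one_mul, hΩ, hZ, hΩZ]
  module

lemma trace_mul_of_sldMap_eq_one (hΩ : Ω * Ω = -1) (hZ : Z * Z = 1) (hΩZ : Ω * Z * Ω = Z)
    (hZtr : Z.trace = 0) {A B : R} {L : Matrix n n R} (hL : sldMap (A • 1 + B • Z) Ω L = 1)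
    (c s : R) :
    ((A ^ 2 - B ^ 2) ^ 2 - 1) * ((c • 1 + s • Z) * L).trace =
      Fintype.card n * (c * (A ^ 2 + B ^ 2 + 1) - 2 * A * B * s) := by
  -- `p` and `q` come from Cramer's rule for `sldMap` on the span of `1` and `Z`.
  set p := c * (A ^ 2 + B ^ 2 + 1) - 2 * A * B * s with hp
  set q := s * (A ^ 2 + B ^ 2 - 1) - 2 * A * B * c with hq
  have hK : sldMap (A • 1 + B • Z) Ω (p • 1 + q • Z) =
      ((A ^ 2 - B ^ 2) ^ 2 - 1) • (c • 1 + s • Z) := by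
    rw [sldMap_smul_one_add_smul hΩ hZ hΩZ, hp, hq]
    module
  calc ((A ^ 2 - B ^ 2) ^ 2 - 1) * ((c • 1 + s • Z) * L).trace
      = (sldMap (A • 1 + B • Z) Ω (p • 1 + q • Z) * L).trace := by
        rw [hK, smul_mul_assoc, trace_smul, smul_eq_mul]
    _ = ((p • 1 + q • Z) * 1).trace := by rw [← trace_mul_sldMap, hL]
    _ = Fintype.card n * p := by
        rw [mul_one, trace_add, trace_smul, trace_smul, trace_one, hZtr, smul_zero, add_zero,
          smul_eq_mul, mul_comm]

end SLDMap

/-- The correlation matrix between the two modes, with off-diagonal blocks `σ_z`: the coefficient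
of `sinh (2r)` in `V0 r`. -/
def modeCorrelation : Matrix (Fin 4) (Fin 4) ℝ :=
  !![0, 0, 1, 0; 0, 0, 0, -1; 1, 0, 0, 0; 0, -1, 0, 0]

lemma Omega4_mul_self : Omega4 * Omega4 = -1 := by
  ext i j
  fin_cases i <;> fin_cases j <;> simp [Omega4, mul_apply, Fin.sum_univ_four]

lemma modeCorrelation_mul_self : modeCorrelation * modeCorrelation = 1 := by
  ext i j
  fin_cases i <;> fin_cases j <;> simp [modeCorrelation, mul_apply, Fin.sum_univ_four]

lemma Omega4_mul_modeCorrelation_mul_Omega4 :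
    Omega4 * modeCorrelation * Omega4 = modeCorrelation := by
  ext i j
  fin_cases i <;> fin_cases j <;> simp [Omega4, modeCorrelation, mul_apply, Fin.sum_univ_four]

lemma trace_modeCorrelation : modeCorrelation.trace = 0 := by
  simp [modeCorrelation, trace, Fin.sum_univ_four]

lemma det_smul_one_add_smul_modeCorrelation (A B : ℝ) :
    (A • 1 + B • modeCorrelation).det = (A ^ 2 - B ^ 2) ^ 2 := by
  have h_entries : A • 1 + B • modeCorrelation =
      !![A, 0, B, 0; 0, A, 0, -B; B, 0, A, 0; 0, -B, 0, A] := by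
    ext i j
    fin_cases i <;> fin_cases j <;> simp [modeCorrelation]
  rw [h_entries]
  simp [det_succ_row_zero, Fin.sum_univ_succ, Fin.succAbove]
  ring

lemma V0_eq (r : ℝ) :
    V0 r = Real.cosh (2 * r) • 1 + Real.sinh (2 * r) • modeCorrelation := by
  ext i j
  fin_cases i <;> fin_cases j <;> simp [V0, modeCorrelation]

lemma Sphase_mul_transpose (φ : ℝ) : Sphase φ * (Sphase φ)ᵀ = 1 := by
  ext i j
  fin_cases i <;> fin_cases j <;>
    simp [Sphase, mul_apply, Fin.sum_univ_four, ← sq, mul_comm]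

lemma Sphase_mul_modeCorrelation (φ : ℝ) :
    Sphase φ * modeCorrelation = modeCorrelation * Sphase φ := by
  ext i j
  fin_cases i <;> fin_cases j <;> simp [Sphase, modeCorrelation, mul_apply, Fin.sum_univ_four]

lemma Sphase_mul_V0_mul_transpose (r φ : ℝ) : Sphase φ * V0 r * (Sphase φ)ᵀ = V0 r := by
  have h_comm : Sphase φ * V0 r = V0 r * Sphase φ := by
    simp only [V0_eq, mul_add, add_mul, mul_smul_comm, smul_mul_assoc, mul_one, one_mul,
      Sphase_mul_modeCorrelation]
  rw [h_comm, mul_assoc, Sphase_mul_transpose, mul_one]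

lemma Vm_eq_smul_V0_add_smul_one (r φ x y : ℝ) : Vm r φ x y = x • V0 r + y • 1 := by
  rw [Vm, Sphase_mul_V0_mul_transpose]

lemma Vm_eq (r φ x y : ℝ) :
    Vm r φ x y = (x * Real.cosh (2 * r) + y) • 1 + (x * Real.sinh (2 * r)) • modeCorrelation := by
  rw [Vm_eq_smul_V0_add_smul_one, V0_eq]
  module

lemma dVdx_eq_V0 (r φ x y : ℝ) : dVdx r φ x y = V0 r := by
  ext i j
  simp [dVdx, Vm_eq_smul_V0_add_smul_one]

lemma dVdy_eq_one (r φ x y : ℝ) : dVdy r φ x y = 1 := by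
  ext i j
  simp [dVdy, Vm_eq_smul_V0_add_smul_one]

lemma ddy_eq_zero (a φ x y : ℝ) : ddy a φ x y = 0 := by
  ext i
  simp [ddy]

lemma sq_sub_sq_cosh_sinh (r x y : ℝ) :
    (x * Real.cosh r + y) ^ 2 - (x * Real.sinh r) ^ 2 =
      x ^ 2 + y ^ 2 + 2 * x * y * Real.cosh r := by
  linear_combination x ^ 2 * Real.cosh_sq r

lemma det_Vm (r φ x y : ℝ) :
    (Vm r φ x y).det = (x ^ 2 + y ^ 2 + 2 * x * y * Real.cosh (2 * r)) ^ 2 := by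
  rw [Vm_eq, det_smul_one_add_smul_modeCorrelation, sq_sub_sq_cosh_sinh]

lemma one_lt_det_Vm (r φ : ℝ) {x y : ℝ} (hx : 0 ≤ x) (hy : 0 ≤ y) (hxy : 1 < x + y) :
    1 < (Vm r φ x y).det := by
  have h_cosh : x * y ≤ x * y * Real.cosh (2 * r) :=
    le_mul_of_one_le_right (mul_nonneg hx hy) (Real.one_le_cosh _)
  have h_sqrt_det : 1 < x ^ 2 + y ^ 2 + 2 * x * y * Real.cosh (2 * r) := by
    calc 1 < (x + y) ^ 2 := one_lt_pow₀ hxy two_ne_zero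
      _ ≤ x ^ 2 + y ^ 2 + 2 * x * y * Real.cosh (2 * r) := by linarith
  rw [det_Vm]
  exact one_lt_pow₀ h_sqrt_det two_ne_zero

lemma det_Vm_sub_one (r φ x y : ℝ) :
    (Vm r φ x y).det - 1 =
      2 * x * y * (2 * Real.cosh (2 * r) * (x ^ 2 + y ^ 2) + x * y * Real.cosh (4 * r))
        + x ^ 4 + 4 * x ^ 2 * y ^ 2 + y ^ 4 - 1 := by
  have h_cosh : Real.cosh (4 * r) = 2 * Real.cosh (2 * r) ^ 2 - 1 := by
    rw [show 4 * r = 2 * (2 * r) by ring, Real.cosh_two_mul]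
    linarith [Real.cosh_sq (2 * r)]
  rw [det_Vm, h_cosh]
  ring

lemma det_Vm_sub_one_mul_trace_V0_mul {r φ x y : ℝ} {L : Matrix (Fin 4) (Fin 4) ℝ}
    (hL : sldMap (Vm r φ x y) Omega4 L = 1) :
    ((Vm r φ x y).det - 1) * (V0 r * L).trace =
      4 * ((x ^ 2 + y ^ 2 + 1) * Real.cosh (2 * r) + 2 * x * y) := by
  rw [Vm_eq] at hL
  have h_trace := trace_mul_of_sldMap_eq_one Omega4_mul_self modeCorrelation_mul_self
    Omega4_mul_modeCorrelation_mul_Omega4 trace_modeCorrelation hL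
    (Real.cosh (2 * r)) (Real.sinh (2 * r))
  rw [← V0_eq, ← det_smul_one_add_smul_modeCorrelation, ← Vm_eq r φ, Fintype.card_fin] at h_trace
  rw [h_trace]
  push_cast
  linear_combination 4 * (Real.cosh (2 * r) * x ^ 2 + 2 * x * y) * Real.cosh_sq (2 * r)

theorem qfi_x_y_general (r a φ x y : ℝ) (hdet : (Vm r φ x y).det ≠ 1)
    (L : Matrix (Fin 4) (Fin 4) ℝ)
    (hL : Vm r φ x y * L * Vm r φ x y + Omega4 * L * Omega4 = dVdy r φ x y) :
    (1/2) * (dVdx r φ x y * L).trace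
      + 2 * (ddy a φ x y ⬝ᵥ (Vm r φ x y)⁻¹.mulVec (ddx a φ x)) =
    (2 * (x^2 + y^2 + 1) * Real.cosh (2*r) + 4 * x * y)
      / (2 * x * y * (2 * Real.cosh (2*r) * (x^2 + y^2) + x * y * Real.cosh (4*r))
          + x^4 + 4 * x^2 * y^2 + y^4 - 1) := by
  rw [dVdy_eq_one] at hL
  rw [ddy_eq_zero, zero_dotProduct, dVdx_eq_V0, ← det_Vm_sub_one r φ,
    eq_div_iff (sub_ne_zero.mpr hdet)]
  linear_combination (1 / 2) * det_Vm_sub_one_mul_trace_V0_mul hL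

theorem qfi_x_y (r a φ x y : ℝ) (hr : 0 ≤ r) (hx : 0 < x) (hy : |1 - x| < y)
    (L : Matrix (Fin 4) (Fin 4) ℝ) (hLsymm : L.IsSymm)
    (hL : Vm r φ x y * L * Vm r φ x y + Omega4 * L * Omega4 = dVdy r φ x y) :
    (1/2) * (dVdx r φ x y * L).trace
      + 2 * (ddy a φ x y ⬝ᵥ (Vm r φ x y)⁻¹.mulVec (ddx a φ x)) =
    (2 * (x^2 + y^2 + 1) * Real.cosh (2*r) + 4 * x * y)
      / (2 * x * y * (2 * Real.cosh (2*r) * (x^2 + y^2) + x * y * Real.cosh (4*r))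
          + x^4 + 4 * x^2 * y^2 + y^4 - 1) := by
  have hxy : 1 < x + y := by linarith [(le_abs_self (1 - x)).trans_lt hy]
  have hy_nonneg : 0 ≤ y := (abs_nonneg _).trans hy.le
  exact qfi_x_y_general r a φ x y (one_lt_det_Vm r φ hx.le hy_nonneg hxy).ne' L hL
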